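/- Let t ≥ 2, let F be the set of all nonzero vectors of (Fin t → ZMod 2), so that the decision graph D(F) is the complete graph on the 2^t vectors of (Fin t → ZMod 2). Let G be a finite connected simple graph with designated vertex v₀, and let φ, ψ : G → D(F) be graph homomorphisms with φ(v₀) = ψ(v₀) = 0. Then τ_φ and τ_ψ (where τ_φ(𝟙_u + 𝟙_v) = φ(u) + φ(v)) are joined by a walk in the recolouring graph mCol(E_G, F) if and only if φ and ψ are joined by a sequence of graph homomorphisms G → D(F) in which consecutive terms are equal or Kempe-adjacent. -/

import Mathlib

/-- A circuit of a binary matroid with point set `E`: a minimal nonempty subset summing to 0. -/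
def IsCircuit {P : Type*} [AddCommGroup P] (E Z : Finset P) : Prop :=
  Z ⊆ E ∧ Z.Nonempty ∧ ∑ e ∈ Z, e = 0 ∧
    ∀ Z' ⊆ Z, Z'.Nonempty → ∑ e ∈ Z', e = 0 → Z' = Z

/-- A cocircuit: a minimal nonempty subset meeting every circuit evenly. -/
def IsCocircuit {P : Type*} [AddCommGroup P] [DecidableEq P] (E C : Finset P) : Prop :=
  C ⊆ E ∧ C.Nonempty ∧ (∀ Z, IsCircuit E Z → Even (C ∩ Z).card) ∧
    ∀ C' ⊆ C, C'.Nonempty → (∀ Z, IsCircuit E Z → Even (C' ∩ Z).card) → C' = C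

/-- A matroid homomorphism from the matroid on `E` to the matroid on `F`. -/
def IsMHom {P Q : Type*} [AddCommGroup P] [AddCommGroup Q]
    (E : Finset P) (F : Finset Q) (τ : P → Q) : Prop :=
  (∀ e ∈ E, τ e ∈ F) ∧ ∀ Z, IsCircuit E Z → ∑ e ∈ Z, τ e = 0

/-- Adjacency in the recolouring graph: the maps differ exactly on a cocircuit. -/
def MAdj {P Q : Type*} [AddCommGroup P] [AddCommGroup Q] [DecidableEq P]
    (E : Finset P) (τ τ' : P → Q) : Prop :=
  ∃ C, IsCocircuit E C ∧ ∀ e ∈ E, (τ e ≠ τ' e ↔ e ∈ C)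

/-- One step of a walk in `mCol(E,F)`: both maps are homomorphisms and they are
equal (as maps on `E`) or adjacent. -/
def MStep {P Q : Type*} [AddCommGroup P] [AddCommGroup Q] [DecidableEq P]
    (E : Finset P) (F : Finset Q) (τ τ' : P → Q) : Prop :=
  IsMHom E F τ ∧ IsMHom E F τ' ∧ ((∀ e ∈ E, τ e = τ' e) ∨ MAdj E τ τ')

/-- Joined by a walk in the recolouring graph `mCol(E,F)`. -/
def MWalk {P Q : Type*} [AddCommGroup P] [AddCommGroup Q] [DecidableEq P]
    (E : Finset P) (F : Finset Q) : (P → Q) → (P → Q) → Prop :=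
  Relation.ReflTransGen (MStep E F)

/-- The indicator vector of a vertex. -/
def ind {V : Type*} [DecidableEq V] (u : V) : V → ZMod 2 := Pi.single u 1

/-- The decision graph of a set `F` of nonzero vectors. -/
def decisionGraph {m : ℕ} (F : Finset (Fin m → ZMod 2)) : SimpleGraph (Fin m → ZMod 2) where
  Adj v w := v + w ∈ F ∧ v ≠ w
  symm := by
    constructor
    intro v w h
    exact ⟨by rw [add_comm]; exact h.1, h.2.symm⟩
  loopless := by
    constructor
    intro v h
    exact h.2 rfl

/-- The weight of a vector: its number of nonzero coordinates. -/
def wt {n : ℕ} (e : Fin n → ZMod 2) : ℕ := (Finset.univ.filter fun i => e i ≠ 0).card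


/-- Kempe adjacency of two homomorphisms to a decision graph:
`ψ` is obtained from `φ` by adding `b` on the vertex set `U` of a connected
component of the subgraph induced on the vertices coloured `b'` or `b' + b`. -/
def KempeAdj {V : Type*} {m : ℕ} {G : SimpleGraph V} {F : Finset (Fin m → ZMod 2)}
    (φ ψ : G →g decisionGraph F) : Prop :=
  ∃ (b b' : Fin m → ZMod 2) (U : Set V),
    (∃ c : (G.induce {u | φ u = b' ∨ φ u = b' + b}).ConnectedComponent,
      U = Subtype.val '' {x | (G.induce {u | φ u = b' ∨ φ u = b' + b}).connectedComponentMk x = c}) ∧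
    (∀ u ∈ U, ψ u = φ u + b) ∧ (∀ u ∉ U, ψ u = φ u)

theorem aux_add_self {ι : Type*} (x : ι → ZMod 2) : x + x = 0 := by
  ext i; exact CharTwo.add_self_eq_zero _

theorem aux_add_eq_zero {ι : Type*} {x y : ι → ZMod 2} : x + y = 0 ↔ x = y := by
  constructor
  · intro h
    have : x + y + y = y := by rw [h, zero_add]
    rwa [add_assoc, aux_add_self, add_zero] at this
  · rintro rfl; exact aux_add_self x

theorem aux_hom_sum {P Q : Type*} [AddCommGroup P] [AddCommGroup Q] {E Z : Finset P}
    (T : P →+ Q) (hZ : IsCircuit E Z) : ∑ e ∈ Z, T e = 0 := by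
  rw [← map_sum, hZ.2.2.1, map_zero]

/-- the map induced by a vertex colouring -/
noncomputable def auxT {V : Type*} [Fintype V] {t : ℕ} (φ : V → Fin t → ZMod 2) :
    (V → ZMod 2) →+ (Fin t → ZMod 2) :=
  AddMonoidHom.mk' (fun x => ∑ u, x u • φ u) (by
    intro a b
    simp [add_smul, Finset.sum_add_distrib])

theorem auxT_ind {V : Type*} [Fintype V] [DecidableEq V] {t : ℕ} (φ : V → Fin t → ZMod 2)
    (u : V) : auxT φ (ind u) = φ u := by
  simp [auxT, ind, Pi.single_apply]

/-- cut functional -/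
noncomputable def auxL {V : Type*} [Fintype V] (S : Finset V) : (V → ZMod 2) →+ ZMod 2 :=
  AddMonoidHom.mk' (fun x => ∑ u ∈ S, x u) (by
    intro a b
    simp [Finset.sum_add_distrib])

theorem auxL_ind {V : Type*} [Fintype V] [DecidableEq V] (S : Finset V)
    (u : V) : auxL S (ind u) = if u ∈ S then 1 else 0 := by
  simp [auxL, ind, Pi.single_apply]

theorem auxL_edge {V : Type*} [Fintype V] [DecidableEq V] (S : Finset V)
    (u v : V) : auxL S (ind u + ind v) ≠ 0 ↔ ¬ (u ∈ S ↔ v ∈ S) := by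
  rw [map_add, auxL_ind, auxL_ind]
  by_cases hu : u ∈ S <;> by_cases hv : v ∈ S <;> simp [hu, hv, CharTwo.add_self_eq_zero]

theorem auxL_even {V : Type*} [Fintype V] [DecidableEq V] (S : Finset V)
    {E Z : Finset (V → ZMod 2)} (hZ : IsCircuit E Z) :
    Even ((E.filter (fun e => auxL S e ≠ 0)) ∩ Z).card := by
  have h := aux_hom_sum (auxL S) hZ
  have h1 : (E.filter (fun e => auxL S e ≠ 0)) ∩ Z = Z.filter (fun e => auxL S e ≠ 0) := by
    ext e
    simp only [Finset.mem_inter, Finset.mem_filter]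
    have := @hZ.1 e
    tauto
  rw [h1, ← ZMod.natCast_eq_zero_iff_even, Finset.card_filter, Nat.cast_sum]
  refine Eq.trans ?_ h
  refine Finset.sum_congr rfl fun e _ => ?_
  generalize auxL S e = a
  revert a; decide

theorem aux_hom_congr {P Q : Type*} [AddCommGroup P] [AddCommGroup Q] {E : Finset P}
    {F : Finset Q} {τ τ' : P → Q} (h : ∀ e ∈ E, τ e = τ' e) (hτ : IsMHom E F τ) :
    IsMHom E F τ' := by
  refine ⟨fun e he => h e he ▸ hτ.1 e he, fun Z hZ => ?_⟩
  rw [← hτ.2 Z hZ]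
  exact Finset.sum_congr rfl fun e he => (h e (hZ.1 he)).symm

/-- Walk obtained by adding `b` on a cocycle. -/
theorem aux_cocycle_walk {P : Type*} [AddCommGroup P] [DecidableEq P] {t : ℕ}
    (E : Finset P) (F : Finset (Fin t → ZMod 2)) (b : Fin t → ZMod 2) (hb : b ≠ 0) (n : ℕ) :
    ∀ (D : Finset P) (τ τ' : P → Fin t → ZMod 2), D.card = n → D ⊆ E →
      (∀ Z, IsCircuit E Z → Even (D ∩ Z).card) → IsMHom E F τ → IsMHom E F τ' →
      (∀ e ∈ E, τ' e = τ e + if e ∈ D then b else 0) → MWalk E F τ τ' := by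
  induction n using Nat.strong_induction_on with
  | _ n ih =>
  intro D τ τ' hn hDE hD hτ hτ' hd
  rcases D.eq_empty_or_nonempty with rfl | hne
  · exact Relation.ReflTransGen.single ⟨hτ, hτ', Or.inl fun e he => by simp [hd e he]⟩
  obtain ⟨C, hCD, hC⟩ := exists_minimal_le_of_wellFoundedLT
    (fun C : Finset P => C.Nonempty ∧ ∀ Z, IsCircuit E Z → Even (C ∩ Z).card) D ⟨hne, hD⟩
  have hCD : C ⊆ D := hCD
  have hcoc : IsCocircuit E C := ⟨hCD.trans hDE, hC.1.1, hC.1.2, fun C' h1 h2 h3 =>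
    Finset.Subset.antisymm h1 (hC.2 ⟨h2, h3⟩ h1)⟩
  let τ1 : P → Fin t → ZMod 2 := fun e => τ e + if e ∈ C then b else 0
  have hτ1 : IsMHom E F τ1 := by
    refine ⟨fun e he => ?_, fun Z hZ => ?_⟩
    · by_cases h : e ∈ C
      · have := hτ'.1 e he
        rw [hd e he] at this
        simpa [τ1, h, hCD h] using this
      · simpa [τ1, h] using hτ.1 e he
    · simp only [τ1]
      rw [Finset.sum_add_distrib, hτ.2 Z hZ, zero_add, ← Finset.sum_filter, Finset.sum_const,
        Finset.filter_mem_eq_inter, Finset.inter_comm]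
      obtain ⟨k, hk⟩ := hC.1.2 Z hZ
      rw [hk, add_smul]
      exact aux_add_self _
  refine Relation.ReflTransGen.head (b := τ1) ⟨hτ, hτ1, Or.inr ⟨C, hcoc, fun e he => ?_⟩⟩ ?_
  · by_cases h : e ∈ C <;> simp [τ1, h, hb]
  · refine ih (D \ C).card ?_ (D \ C) τ1 τ' rfl (Finset.sdiff_subset.trans hDE) ?_ hτ1 hτ' ?_
    · rw [← hn]
      apply Finset.card_lt_card
      exact Finset.sdiff_ssubset hCD hC.1.1
    · intro Z hZ
      have h1 := hD Z hZ
      have h2 := hC.1.2 Z hZ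
      have h3 : (D \ C) ∩ Z = (D ∩ Z) \ (C ∩ Z) := by ext; simp; tauto
      rw [h3, Finset.card_sdiff_of_subset (Finset.inter_subset_inter_right hCD)]
      rw [Nat.even_iff] at *
      omega
    · intro e he
      rw [hd e he]
      by_cases h : e ∈ C
      · simp [τ1, h, hCD h]
      · simp [τ1, h]

theorem aux_adj {t : ℕ} {F : Finset (Fin t → ZMod 2)} (hF : ∀ x, x ∈ F ↔ x ≠ 0)
    (x y : Fin t → ZMod 2) : (decisionGraph F).Adj x y ↔ x ≠ y := by
  simp only [decisionGraph, hF, ne_eq, aux_add_eq_zero, and_self]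

/-- Adding `b` on a vertex set decomposes into Kempe changes. -/
theorem aux_kempe {V : Type*} [Fintype V] [DecidableEq V] {t : ℕ}
    {F : Finset (Fin t → ZMod 2)} (hF : ∀ x, x ∈ F ↔ x ≠ 0)
    {G : SimpleGraph V} (b : Fin t → ZMod 2) (n : ℕ) :
    ∀ (U : Finset V) (φ ψ : G →g decisionGraph F), U.card = n →
      (∀ u ∈ U, ψ u = φ u + b) → (∀ u ∉ U, ψ u = φ u) →
      Relation.ReflTransGen KempeAdj φ ψ := by
  classical
  induction n using Nat.strong_induction_on with
  | _ n ih =>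
  intro U φ ψ hn hU hU'
  rcases U.eq_empty_or_nonempty with rfl | ⟨u, hu⟩
  · have : φ = ψ := by
      ext1 v; exact (hU' v (by simp)).symm
    rw [this]
  have bb : ∀ x : Fin t → ZMod 2, x + b + b = x := fun x => by
    rw [add_assoc, aux_add_self, add_zero]
  let H := G.induce {v | φ v = φ u ∨ φ v = φ u + b}
  let c := H.connectedComponentMk ⟨u, Or.inl rfl⟩
  let W : Set V := Subtype.val '' {x | H.connectedComponentMk x = c}
  have huW : u ∈ W := ⟨⟨u, Or.inl rfl⟩, rfl, rfl⟩
  have hφadj : ∀ x y, G.Adj x y → φ x ≠ φ y := fun x y h => (aux_adj hF _ _).1 (φ.map_adj h)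
  have hψadj : ∀ x y, G.Adj x y → ψ x ≠ ψ y := fun x y h => (aux_adj hF _ _).1 (ψ.map_adj h)
  have hWU : W ⊆ (U : Set V) := by
    rintro _ ⟨x, hx, rfl⟩
    have hx : H.connectedComponentMk x = c := hx
    have hr : H.Reachable ⟨u, Or.inl rfl⟩ x := SimpleGraph.ConnectedComponent.exact hx.symm
    by_contra hxU
    obtain ⟨p⟩ := hr
    obtain ⟨d, -, h1, h2⟩ := p.exists_boundary_dart {x | x.1 ∈ U} hu hxU
    have hadj : G.Adj d.fst.1 d.snd.1 := d.adj
    have e1 := hU _ h1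
    have e2 := hU' _ h2
    have n1 := hφadj _ _ hadj
    have n2 := hψadj _ _ hadj
    rw [e1, e2] at n2
    rcases d.fst.2 with k1 | k1 <;> rcases d.snd.2 with k2 | k2 <;>
      rw [k1, k2] at n1 n2 <;> simp [bb] at n1 n2
  have hcross : ∀ x y, G.Adj x y → x ∈ W → y ∉ W → φ x + b ≠ φ y := by
    rintro _ y hadj ⟨x, hx, rfl⟩ hy h
    have hx : H.connectedComponentMk x = c := hx
    apply hy
    have hyS : φ y = φ u ∨ φ y = φ u + b := by
      rcases x.2 with k | k
      · right; rw [← h, k]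
      · left; rw [← h, k, bb]
    refine ⟨⟨y, hyS⟩, ?_, rfl⟩
    show H.connectedComponentMk ⟨y, hyS⟩ = c
    rw [← hx]
    apply SimpleGraph.ConnectedComponent.sound
    exact SimpleGraph.Adj.reachable (show H.Adj ⟨y, hyS⟩ x from hadj.symm)
  let φ1 : G →g decisionGraph F :=
    { toFun := fun v => if v ∈ W then φ v + b else φ v
      map_rel' := by
        intro x y hadj
        rw [aux_adj hF]
        have h0 := hφadj _ _ hadj
        by_cases hx : x ∈ W <;> by_cases hy : y ∈ W
        · simpa [hx, hy] using h0
        · simpa [hx, hy] using hcross _ _ hadj hx hy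
        · simpa [hx, hy] using (hcross _ _ hadj.symm hy hx).symm
        · simpa [hx, hy] using h0 }
  have hφ1 : ∀ v, φ1 v = if v ∈ W then φ v + b else φ v := fun v => rfl
  refine Relation.ReflTransGen.head (b := φ1) ⟨b, φ u, W, ⟨c, rfl⟩, ?_, ?_⟩ ?_
  · intro v hv; rw [hφ1, if_pos hv]
  · intro v hv; rw [hφ1, if_neg hv]
  · refine ih (U.filter (· ∉ W)).card ?_ (U.filter (· ∉ W)) φ1 ψ rfl ?_ ?_
    · rw [← hn]
      apply Finset.card_lt_card
      rw [Finset.filter_ssubset]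
      exact ⟨u, hu, not_not.2 huW⟩
    · intro v hv
      rw [Finset.mem_filter] at hv
      rw [hφ1, if_neg hv.2, hU v hv.1]
    · intro v hv
      rw [Finset.mem_filter] at hv
      rw [hφ1]
      by_cases h : v ∈ W
      · rw [if_pos h, hU v (hWU h)]
      · rw [if_neg h, hU' v (fun h' => hv ⟨h', h⟩)]

/-- Matroid homomorphisms vanish on all cycles. -/
theorem aux_cycle {P Q : Type*} [AddCommGroup P] [AddCommGroup Q] [DecidableEq P]
    {E : Finset P} {τ : P → Q}
    (hτ : ∀ Z, IsCircuit E Z → ∑ e ∈ Z, τ e = 0) (n : ℕ) :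
    ∀ Z : Finset P, Z.card = n → Z ⊆ E → ∑ e ∈ Z, e = 0 → ∑ e ∈ Z, τ e = 0 := by
  induction n using Nat.strong_induction_on with
  | _ n ih =>
  intro Z hn hZE hZ
  rcases Z.eq_empty_or_nonempty with rfl | hne
  · simp
  obtain ⟨C, hCZ, hC⟩ := exists_minimal_le_of_wellFoundedLT
    (fun C : Finset P => C.Nonempty ∧ ∑ e ∈ C, e = 0) Z ⟨hne, hZ⟩
  have hCZ : C ⊆ Z := hCZ
  have hcir : IsCircuit E C := ⟨hCZ.trans hZE, hC.1.1, hC.1.2, fun C' h1 h2 h3 =>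
    Finset.Subset.antisymm h1 (hC.2 ⟨h2, h3⟩ h1)⟩
  rw [← Finset.sum_sdiff hCZ, hτ C hcir, add_zero]
  refine ih (Z \ C).card ?_ _ rfl (Finset.sdiff_subset.trans hZE) ?_
  · rw [← hn]
    exact Finset.card_lt_card (Finset.sdiff_ssubset hCZ hC.1.1)
  · rw [← Finset.sum_sdiff hCZ, hC.1.2, add_zero] at hZ
    exact hZ

theorem aux_linear {P Q : Type*} [AddCommGroup P] [AddCommGroup Q] [DecidableEq P]
    [Module (ZMod 2) P] [Module (ZMod 2) Q] {E : Finset P} {τ : P → Q}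
    (hτ : ∀ Z, IsCircuit E Z → ∑ e ∈ Z, τ e = 0) :
    ∃ T : P →ₗ[ZMod 2] Q, ∀ e ∈ E, T e = τ e := by
  let f := Fintype.linearCombination (ZMod 2) (fun e : E => (e : P))
  let g := Fintype.linearCombination (ZMod 2) (fun e : E => τ (e : P))
  have hfg : LinearMap.ker f ≤ LinearMap.ker g := by
    intro c hc
    rw [LinearMap.mem_ker] at hc ⊢
    simp only [f, g, Fintype.linearCombination_apply] at hc ⊢
    have hs : ∀ x : E, c x • τ x = if c x ≠ 0 then τ x else 0 := by
      intro x
      have : ∀ a : ZMod 2, a = 0 ∨ a = 1 := by decide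
      rcases this (c x) with h | h <;> simp [h]
    have hs' : ∀ x : E, c x • (x : P) = if c x ≠ 0 then (x : P) else 0 := by
      intro x
      have : ∀ a : ZMod 2, a = 0 ∨ a = 1 := by decide
      rcases this (c x) with h | h <;> simp [h]
    simp only [hs, hs'] at hc ⊢
    rw [← Finset.sum_filter] at hc ⊢
    have := aux_cycle hτ _ ((Finset.univ.filter (fun x : E => c x ≠ 0)).map
      (Function.Embedding.subtype _)) rfl (by
        intro e he
        simp only [Finset.mem_map] at he
        obtain ⟨x, -, rfl⟩ := he
        exact x.2) (by rw [Finset.sum_map]; exact hc)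
    rw [Finset.sum_map] at this
    exact this
  obtain ⟨l, hl⟩ := LinearMap.exists_leftInverse_of_injective
    ((LinearMap.ker f).liftQ f le_rfl) (Submodule.ker_liftQ_eq_bot _ _ _ le_rfl)
  refine ⟨((LinearMap.ker f).liftQ g hfg).comp l, fun e he => ?_⟩
  have h1 : f (Pi.single ⟨e, he⟩ 1) = e := by
    simp [f]
  have h2 : g (Pi.single ⟨e, he⟩ 1) = τ e := by
    simp [g]
  have h3 := LinearMap.congr_fun hl (Submodule.Quotient.mk (Pi.single ⟨e, he⟩ 1))
  simp only [LinearMap.comp_apply, Submodule.liftQ_apply, LinearMap.id_apply] at h3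
  rw [h1] at h3
  rw [LinearMap.comp_apply, h3, Submodule.liftQ_apply, h2]

theorem aux_unique {V : Type*} {t : ℕ} {G : SimpleGraph V} (hG : G.Connected) (v₀ : V)
    (φ ψ : V → Fin t → ZMod 2) (h0 : φ v₀ = ψ v₀)
    (h : ∀ u v, G.Adj u v → φ u + φ v = ψ u + ψ v) (v : V) : φ v = ψ v := by
  by_contra hv
  obtain ⟨p⟩ := hG.preconnected v₀ v
  obtain ⟨d, -, h1, h2⟩ := p.exists_boundary_dart {x | φ x = ψ x} h0 hv
  have := h _ _ d.adj
  rw [show φ d.fst = ψ d.fst from h1] at this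
  exact h2 (add_left_cancel this)

/-- One matroid step lifts to a Kempe sequence. -/
theorem aux_step {V : Type*} [Fintype V] [DecidableEq V] {t : ℕ}
    {F : Finset (Fin t → ZMod 2)} (hF : ∀ x, x ∈ F ↔ x ≠ 0)
    {G : SimpleGraph V} (hG : G.Connected) (v₀ : V)
    {EG : Finset (V → ZMod 2)}
    (hEG : ∀ x, x ∈ EG ↔ ∃ u v, G.Adj u v ∧ x = ind u + ind v)
    (φ : G →g decisionGraph F) (hφ : φ v₀ = 0)
    (τ τ' : (V → ZMod 2) → (Fin t → ZMod 2))
    (hτ : ∀ u v, G.Adj u v → τ (ind u + ind v) = φ u + φ v)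
    (hs : MStep EG F τ τ') :
    ∃ ψ : G →g decisionGraph F, ψ v₀ = 0 ∧
      (∀ u v, G.Adj u v → τ' (ind u + ind v) = ψ u + ψ v) ∧
      Relation.ReflTransGen KempeAdj φ ψ := by
  classical
  obtain ⟨-, hτ', hs⟩ := hs
  have hmem : ∀ u v, G.Adj u v → ind u + ind v ∈ EG := fun u v h => (hEG _).2 ⟨u, v, h, rfl⟩
  obtain ⟨T, hT⟩ := aux_linear hτ'.2
  have hTe : ∀ u v, G.Adj u v →
      τ' (ind u + ind v) = (T (ind u) + T (ind v₀)) + (T (ind v) + T (ind v₀)) := by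
    intro u v h
    rw [← hT _ (hmem u v h), map_add, add_add_add_comm, aux_add_self, add_zero]
  let ψ : G →g decisionGraph F :=
    { toFun := fun u => T (ind u) + T (ind v₀)
      map_rel' := by
        intro u v h
        rw [aux_adj hF]
        intro he
        have h1 := hτ'.1 _ (hmem u v h)
        rw [hTe u v h, hF] at h1
        exact h1 (aux_add_eq_zero.2 he) }
  have hψ0 : ψ v₀ = 0 := aux_add_self _
  have hψ : ∀ u v, G.Adj u v → τ' (ind u + ind v) = ψ u + ψ v := hTe
  refine ⟨ψ, hψ0, hψ, ?_⟩
  rcases hs with hs | ⟨C, hC, hdiff⟩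
  · have : φ = ψ := by
      ext1 v
      refine aux_unique hG v₀ φ ψ (hφ.trans hψ0.symm) (fun u v h => ?_) v
      rw [← hτ u v h, ← hψ u v h, hs _ (hmem u v h)]
    rw [this]
  let g : V → Fin t → ZMod 2 := fun u => φ u + ψ u
  have hg0 : g v₀ = 0 := by simp [g, hφ, hψ0]
  have hψg : ∀ u, ψ u = φ u + g u := fun u => by
    simp only [g]; rw [← add_assoc, aux_add_self, zero_add]
  have hgC : ∀ u v, G.Adj u v → (ind u + ind v ∈ C ↔ g u ≠ g v) := by
    intro u v h
    rw [← hdiff _ (hmem u v h), hτ u v h, hψ u v h, not_iff_not, ← aux_add_eq_zero,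
      ← aux_add_eq_zero (x := g u)]
    simp only [g]
    rw [add_add_add_comm]
  obtain ⟨e0, he0⟩ := hC.2.1
  obtain ⟨p, q, hpq, rfl⟩ := (hEG _).1 (hC.1 he0)
  have hval : ∀ w, g w = g p ∨ g w = g q := by
    intro w
    by_contra hw
    push Not at hw
    let S : Finset V := Finset.univ.filter (fun v => g v = g w)
    have hD := hC.2.2.2 (EG.filter (fun e => auxL S e ≠ 0)) ?_ ?_ (fun Z hZ => auxL_even S hZ)
    · rw [← hD, Finset.mem_filter, auxL_edge] at he0
      apply he0.2
      simp [S, hw.1.symm, hw.2.symm]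
    · intro e he
      rw [Finset.mem_filter] at he
      obtain ⟨u, v, huv, rfl⟩ := (hEG _).1 he.1
      have h2 := (auxL_edge _ _ _).1 he.2
      rw [hgC u v huv]
      intro heq
      simp [S, heq] at h2
    · obtain ⟨r⟩ := hG.preconnected w p
      obtain ⟨d, -, h1, h2⟩ := r.exists_boundary_dart (S : Set V) (by simp [S])
        (by simp [S, hw.1.symm])
      refine ⟨ind d.fst + ind d.snd, Finset.mem_filter.2 ⟨hmem _ _ d.adj, ?_⟩⟩
      rw [auxL_edge]
      intro h
      exact h2 (h.1 h1)
  refine aux_kempe hF (g p + g q) _ (Finset.univ.filter (fun u => g u ≠ 0)) φ ψ rfl ?_ ?_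
  · intro u hu
    have hu : g u ≠ 0 := by simpa using hu
    rw [hψg u]
    congr 1
    rcases hval v₀ with h | h <;> rw [hg0] at h <;> rw [← h] <;>
      rcases hval u with h' | h' <;> rw [h'] <;> rw [h'] at hu <;> simp [← h] at hu ⊢
  · intro u hu
    have hu : g u = 0 := by simpa using hu
    rw [hψg u, hu, add_zero]

theorem auxT_hom {V : Type*} [Fintype V] [DecidableEq V] {t : ℕ}
    {F : Finset (Fin t → ZMod 2)} {G : SimpleGraph V}
    {EG : Finset (V → ZMod 2)}
    (hEG : ∀ x, x ∈ EG ↔ ∃ u v, G.Adj u v ∧ x = ind u + ind v)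
    (φ : G →g decisionGraph F) : IsMHom EG F (auxT φ) := by
  refine ⟨fun e he => ?_, fun Z hZ => aux_hom_sum _ hZ⟩
  obtain ⟨u, v, h, rfl⟩ := (hEG _).1 he
  rw [map_add, auxT_ind, auxT_ind]
  exact (φ.map_adj h).1

theorem aux_back {V : Type*} [Fintype V] [DecidableEq V] {t : ℕ}
    {F : Finset (Fin t → ZMod 2)} {G : SimpleGraph V}
    {EG : Finset (V → ZMod 2)}
    (hEG : ∀ x, x ∈ EG ↔ ∃ u v, G.Adj u v ∧ x = ind u + ind v)
    (φ ψ : G →g decisionGraph F) (h : KempeAdj φ ψ) : MWalk EG F (auxT φ) (auxT ψ) := by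
  classical
  obtain ⟨b, b', U, -, hU, hU'⟩ := h
  by_cases hb : b = 0
  · have : φ = ψ := by
      ext1 v
      by_cases hv : v ∈ U
      · rw [hU v hv, hb, add_zero]
      · rw [hU' v hv]
    rw [this]
    exact Relation.ReflTransGen.refl
  let S : Finset V := Finset.univ.filter (· ∈ U)
  refine aux_cocycle_walk EG F b hb _ (EG.filter (fun e => auxL S e ≠ 0)) _ _ rfl
    (Finset.filter_subset _ _) (fun Z hZ => auxL_even S hZ) (auxT_hom hEG φ) (auxT_hom hEG ψ) ?_
  intro e he
  have hmem : e ∈ EG.filter (fun e => auxL S e ≠ 0) ↔ auxL S e ≠ 0 := by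
    simp [he]
  simp only [hmem]
  obtain ⟨u, v, h, rfl⟩ := (hEG _).1 he
  simp only [auxL_edge]
  rw [map_add, map_add, auxT_ind, auxT_ind, auxT_ind, auxT_ind]
  by_cases hu : u ∈ U <;> by_cases hv : v ∈ U
  · simp [S, hu, hv, hU, add_add_add_comm _ b, aux_add_self]
  · simp [S, hu, hv, hU, hU', add_right_comm]
  · simp [S, hu, hv, hU, hU', add_assoc]
  · simp [S, hu, hv, hU']

theorem stmt14 {V : Type*} [Fintype V] [DecidableEq V] (t : ℕ) (ht : 2 ≤ t)
    (F : Finset (Fin t → ZMod 2)) (hF : ∀ x, x ∈ F ↔ x ≠ 0)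
    (G : SimpleGraph V) (hG : G.Connected) (v₀ : V)
    (EG : Finset (V → ZMod 2))
    (hEG : ∀ x, x ∈ EG ↔ ∃ u v, G.Adj u v ∧ x = ind u + ind v)
    (φ ψ : G →g decisionGraph F) (hφ : φ v₀ = 0) (hψ : ψ v₀ = 0)
    (τφ τψ : (V → ZMod 2) → (Fin t → ZMod 2))
    (hτφ : ∀ u v, G.Adj u v → τφ (ind u + ind v) = φ u + φ v)
    (hτψ : ∀ u v, G.Adj u v → τψ (ind u + ind v) = ψ u + ψ v) :
    MWalk EG F τφ τψ ↔ Relation.ReflTransGen KempeAdj φ ψ := by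
  have hmem : ∀ u v, G.Adj u v → ind u + ind v ∈ EG := fun u v h => (hEG _).2 ⟨u, v, h, rfl⟩
  constructor
  · intro h
    have key : ∃ ψ' : G →g decisionGraph F, ψ' v₀ = 0 ∧
        (∀ u v, G.Adj u v → τψ (ind u + ind v) = ψ' u + ψ' v) ∧
        Relation.ReflTransGen KempeAdj φ ψ' := by
      clear hτψ
      induction h with
      | refl => exact ⟨φ, hφ, hτφ, Relation.ReflTransGen.refl⟩
      | tail _ hs ih =>
        obtain ⟨ψ1, h0, h1, h2⟩ := ih
        obtain ⟨ψ2, k0, k1, k2⟩ := aux_step hF hG v₀ hEG ψ1 h0 _ _ h1 hs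
        exact ⟨ψ2, k0, k1, h2.trans k2⟩
    obtain ⟨ψ', h0, h1, h2⟩ := key
    have : ψ' = ψ := by
      ext1 v
      refine aux_unique hG v₀ ψ' ψ (h0.trans hψ.symm) (fun u v h => ?_) v
      rw [← h1 u v h, hτψ u v h]
    rwa [this] at h2
  · intro h
    have hw : MWalk EG F (auxT φ) (auxT ψ) := by
      clear hτψ hψ
      induction h with
      | refl => exact Relation.ReflTransGen.refl
      | tail _ hs ih => exact Relation.ReflTransGen.trans ih (aux_back hEG _ _ hs)
    have eq : ∀ (χ : G →g decisionGraph F) (τ : (V → ZMod 2) → (Fin t → ZMod 2)),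
        (∀ u v, G.Adj u v → τ (ind u + ind v) = χ u + χ v) → ∀ e ∈ EG, auxT χ e = τ e := by
      intro χ τ hh e he
      obtain ⟨u, v, h, rfl⟩ := (hEG _).1 he
      rw [map_add, auxT_ind, auxT_ind, hh u v h]
    have e1 := eq φ τφ hτφ
    have e2 := eq ψ τψ hτψ
    have s1 : MStep EG F τφ (auxT φ) := ⟨aux_hom_congr e1 (auxT_hom hEG φ),
      auxT_hom hEG φ, Or.inl fun e he => (e1 e he).symm⟩
    have s2 : MStep EG F (auxT ψ) τψ := ⟨auxT_hom hEG ψ, aux_hom_congr e2 (auxT_hom hEG ψ),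
      Or.inl e2⟩
    exact Relation.ReflTransGen.head s1 (Relation.ReflTransGen.tail hw s2)
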